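/- There is an absolute constant C such that for all sufficiently large N and all 2 < h ≤ N, the number of ordered pairs of primes (p, p') with N < p < p' ≤ 2N, p' − p ≤ h, and such that p and p' are NOT consecutive primes (i.e., there exists a prime strictly between p and p') is at most C·(h/log N)²·π(N). -/

import Mathlib

open Finset

/-- The `n`-th prime number (`nthPrime 0 = 2`). -/
noncomputable def nthPrime (n : ℕ) : ℕ := Nat.nth Nat.Prime n

/-- The prime counting function `π(x)` at a real argument: the number of primes `≤ x`. -/
noncomputable def primePi (x : ℝ) : ℕ := Nat.primeCounting ⌊x⌋₊

/-- `P_H(n) = ∏_{h ∈ H} (n + h)`. -/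
def tuplePoly (H : Finset ℕ) (n : ℕ) : ℕ := ∏ h ∈ H, (n + h)

/-- `ν_p(H)`: the number of distinct residue classes modulo `p` occupied by `H`. -/
def nuP (p : ℕ) (H : Finset ℕ) : ℕ := (H.image (· % p)).card

/-- `H` is admissible: for every prime `p`, the elements of `H` miss a residue class mod `p`. -/
def Admissible (H : Finset ℕ) : Prop := ∀ p : ℕ, p.Prime → nuP p H < p

/-- The singular series `𝔖(H) = ∏_p (1 - 1/p)^{-|H|} (1 - ν_p(H)/p)`. -/
noncomputable def singularSeries (H : Finset ℕ) : ℝ :=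
  ∏' p : Nat.Primes, ((1 - 1/((p : ℕ) : ℝ)) ^ (-(H.card : ℤ)) * (1 - (nuP p H : ℝ)/((p : ℕ) : ℝ)))

/-- `Λ_R(n; H, ℓ) = (1/(|H|+ℓ)!) ∑_{d ∣ P_H(n), d ≤ R} μ(d) (log (R/d))^{|H|+ℓ}`. -/
noncomputable def LambdaR (R : ℝ) (n : ℕ) (H : Finset ℕ) (ℓ : ℕ) : ℝ :=
  (1 / (H.card + ℓ).factorial : ℝ) *
    ∑ d ∈ (tuplePoly H n).divisors.filter (fun d : ℕ => (d : ℝ) ≤ R),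
      (ArithmeticFunction.moebius d : ℝ) * (Real.log (R / d)) ^ (H.card + ℓ)

/-- `𝒫(x)`: the product of all primes `≤ x`. -/
noncomputable def primorialReal (x : ℝ) : ℕ :=
  ∏ p ∈ (Finset.range (⌊x⌋₊ + 1)).filter Nat.Prime, p

/-- `θ(n) = log n` if `n` is prime, and `0` otherwise. -/
noncomputable def theta (n : ℕ) : ℝ := if n.Prime then Real.log n else 0

/-- `∑_{p ≤ N, p prime, p ≡ a (mod q)} log p`. -/
noncomputable def primeSumAP (N q a : ℕ) : ℝ :=
  ∑ p ∈ (Finset.range (N+1)).filter (fun p => p.Prime ∧ p % q = a % q), Real.log p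

/-- The primes have level of distribution `ϑ`: for every `A > 0` and `ε > 0`,
`∑_{q ≤ N^{ϑ-ε}} max_{(a,q)=1} |∑_{p ≤ N, p ≡ a (q)} log p - N/φ(q)| ≪_{A,ε} N (log N)^{-A}`
(the max over `a` is expressed via an arbitrary coprime choice function `a : ℕ → ℕ`). -/
def HasLevelOfDistribution (ϑ : ℝ) : Prop :=
  ∀ A : ℝ, 0 < A → ∀ ε : ℝ, 0 < ε → ∃ C : ℝ, 0 < C ∧
    ∀ N : ℕ, 2 ≤ N → ∀ a : ℕ → ℕ, (∀ q : ℕ, Nat.Coprime (a q) q) →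
      ∑ q ∈ Finset.Icc 1 ⌊(N : ℝ) ^ (ϑ - ε)⌋₊,
        |primeSumAP N q (a q) - (N : ℝ) / (Nat.totient q)| ≤ C * N / (Real.log N) ^ A

/-- The number of `j` with `N < p_j ≤ 2N` and `p_{j+1} - p_j ≤ h`. -/
noncomputable def gapCount (N : ℕ) (h : ℝ) : ℕ :=
  ((Finset.range (2*N+1)).filter (fun j =>
    N < nthPrime j ∧ nthPrime j ≤ 2*N ∧ ((nthPrime (j+1) : ℝ) - nthPrime j) ≤ h)).card

/-- The number of `j` with `N < p_j ≤ 2N` and `p_{j+2} - p_j ≤ h`. -/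
noncomputable def gapCount2 (N : ℕ) (h : ℝ) : ℕ :=
  ((Finset.range (2*N+1)).filter (fun j =>
    N < nthPrime j ∧ nthPrime j ≤ 2*N ∧ ((nthPrime (j+2) : ℝ) - nthPrime j) ≤ h)).card


namespace Pf

lemma sum_moebius_between {l m : ℕ} (hm : Squarefree m) (hl : l ∣ m) :
    (∑ d ∈ m.divisors with l ∣ d, (ArithmeticFunction.moebius d : ℝ))
      = if l = m then (ArithmeticFunction.moebius l : ℝ) else 0 := by
  obtain ⟨e, rfl⟩ := hl
  have hne : l * e ≠ 0 := hm.ne_zero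
  have hl0 : l ≠ 0 := left_ne_zero_of_mul hne
  have he0 : e ≠ 0 := right_ne_zero_of_mul hne
  have hset : ((l * e).divisors.filter (fun d => l ∣ d)) = e.divisors.image (fun d => l * d) := by
    ext d
    simp only [mem_filter, Nat.mem_divisors, mem_image]
    constructor
    · rintro ⟨⟨h1, _⟩, ⟨c, rfl⟩⟩
      exact ⟨c, ⟨Nat.dvd_of_mul_dvd_mul_left (Nat.pos_of_ne_zero hl0) h1, he0⟩, rfl⟩
    · rintro ⟨c, ⟨hc, _⟩, rfl⟩
      exact ⟨⟨Nat.mul_dvd_mul_left l hc, hne⟩, Dvd.intro _ rfl⟩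
  rw [hset, sum_image (by
    intro a _ b _ hab
    exact Nat.eq_of_mul_eq_mul_left (Nat.pos_of_ne_zero hl0) hab)]
  have h1 : ∀ d ∈ e.divisors, ((ArithmeticFunction.moebius (l * d) : ℤ) : ℝ)
      = (ArithmeticFunction.moebius l : ℝ) * (ArithmeticFunction.moebius d : ℝ) := by
    intro d hd
    have hcop : Nat.Coprime l d :=
      Nat.Coprime.coprime_dvd_right (Nat.dvd_of_mem_divisors hd) (Nat.coprime_of_squarefree_mul hm)
    rw [ArithmeticFunction.isMultiplicative_moebius.map_mul_of_coprime hcop]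
    push_cast; rfl
  rw [sum_congr rfl h1, ← mul_sum]
  have h2 : (∑ d ∈ e.divisors, (ArithmeticFunction.moebius d : ℝ)) = if e = 1 then 1 else 0 := by
    have := ArithmeticFunction.coe_mul_zeta_apply (f := ArithmeticFunction.moebius) (x := e)
    rw [ArithmeticFunction.moebius_mul_coe_zeta, ArithmeticFunction.one_apply] at this
    exact_mod_cast this.symm
  rw [h2]
  by_cases h : e = 1
  · simp [h]
  · have : ¬ (l = l * e) := by
      intro h'
      apply h
      have : l * e = l * 1 := by omega
      exact Nat.eq_of_mul_eq_mul_left (Nat.pos_of_ne_zero hl0) this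
    simp [h, this]

/-- Abstract Selberg sieve with a crude error term. -/
theorem selberg (s : BoundingSieve) (z : ℕ) (hz : 1 ≤ z)
    (hnu : ∀ d, d ∣ s.prodPrimes → (s.nu d)⁻¹ ≤ d)
    (hrem : ∀ d, d ∣ s.prodPrimes → |s.rem d| ≤ d) :
    s.siftedSum ≤ s.totalMass / (∑ l ∈ s.prodPrimes.divisors with l ≤ z, s.selbergTerms l)
      + (z : ℝ) ^ 6 := by
  classical
  set P := s.prodPrimes with hP
  have hP0 : P ≠ 0 := BoundingSieve.prodPrimes_ne_zero
  set L : ℝ := ∑ l ∈ P.divisors with l ≤ z, s.selbergTerms l with hL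
  have hgpos : ∀ l ∈ P.divisors, 0 < s.selbergTerms l := fun l hl =>
    BoundingSieve.selbergTerms_pos (Nat.dvd_of_mem_divisors hl)
  have hLpos : 0 < L := by
    apply sum_pos
    · intro l hl; exact hgpos l (mem_filter.1 hl).1
    · exact ⟨1, by simp [hP0, hz]⟩
  let G : ℕ → ℝ := fun d => ∑ m ∈ P.divisors with (d ∣ m ∧ m ≤ z), s.selbergTerms m
  have hG0 : ∀ d, 0 ≤ G d := fun d => sum_nonneg fun m hm => (hgpos m (mem_filter.1 hm).1).le
  have hGL : ∀ d, G d ≤ L := by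
    intro d
    apply sum_le_sum_of_subset_of_nonneg
    · intro m hm; simp only [mem_filter] at hm ⊢; exact ⟨hm.1, hm.2.2⟩
    · intro m hm _; exact (hgpos m (mem_filter.1 hm).1).le
  let w : ℕ → ℝ := fun d => (ArithmeticFunction.moebius d : ℝ) * (s.nu d)⁻¹ * G d / L
  have hw1 : w 1 = 1 := by
    have : G 1 = L := by simp [G, hL]
    simp only [w, this, s.nu_mult.map_one]
    simp [hLpos.ne']
  have hwabs : ∀ d ∈ P.divisors, |w d| ≤ if d ≤ z then (z:ℝ) else 0 := by
    intro d hd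
    have hdP := Nat.dvd_of_mem_divisors hd
    split_ifs with hdz
    · have h1 : |(ArithmeticFunction.moebius d : ℝ)| ≤ 1 := by
        have := ArithmeticFunction.abs_moebius_le_one (n := d)
        exact_mod_cast this
      have hnupos : 0 < s.nu d := BoundingSieve.nu_pos_of_dvd_prodPrimes hdP
      have : |w d| = |(ArithmeticFunction.moebius d : ℝ)| * ((s.nu d)⁻¹ * (G d / L)) := by
        simp only [w]
        rw [abs_div, abs_mul, abs_mul, abs_of_pos hLpos, abs_of_nonneg (hG0 d),
          abs_of_pos (inv_pos.2 hnupos)]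
        ring
      rw [this]
      have h2 : G d / L ≤ 1 := (div_le_one hLpos).2 (hGL d)
      have h3 : 0 ≤ G d / L := div_nonneg (hG0 d) hLpos.le
      have h4 : (s.nu d)⁻¹ ≤ z := (hnu d hdP).trans (by exact_mod_cast hdz)
      have h5 : 0 ≤ (s.nu d)⁻¹ := (inv_pos.2 hnupos).le
      calc _ ≤ 1 * ((z:ℝ) * 1) := by gcongr
        _ = z := by ring
    · have : G d = 0 := by
        apply sum_eq_zero
        intro m hm
        simp only [mem_filter, Nat.mem_divisors] at hm
        exfalso
        have : d ≤ m := Nat.le_of_dvd (Nat.pos_of_ne_zero (ne_zero_of_dvd_ne_zero hm.1.2 hm.1.1)) hm.2.1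
        omega
      simp [w, this]
  have hmain : s.mainSum (BoundingSieve.lambdaSquared w) = 1 / L := by
    rw [BoundingSieve.mainSum_lambdaSquared_eq_sum_mul_sum_sq]
    have key : ∀ l ∈ P.divisors, (∑ d ∈ P.divisors, if l ∣ d then s.nu d * w d else 0)
        = if l ≤ z then (ArithmeticFunction.moebius l : ℝ) * s.selbergTerms l / L else 0 := by
      intro l hl
      have hlP := Nat.dvd_of_mem_divisors hl
      have e1 : ∀ d ∈ P.divisors, (if l ∣ d then s.nu d * w d else 0)
          = ∑ m ∈ P.divisors, if (l ∣ d ∧ d ∣ m ∧ m ≤ z) then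
              (ArithmeticFunction.moebius d : ℝ) * s.selbergTerms m / L else 0 := by
        intro d hd
        have hn : s.nu d ≠ 0 := BoundingSieve.nu_ne_zero (Nat.dvd_of_mem_divisors hd)
        by_cases h : l ∣ d
        · simp only [h, if_true, true_and, w, G]
          rw [← sum_filter]
          rw [← sum_div, ← mul_sum]
          field_simp
        · simp [h]
      rw [sum_congr rfl e1, sum_comm]
      have e2 : ∀ m ∈ P.divisors, (∑ d ∈ P.divisors, if (l ∣ d ∧ d ∣ m ∧ m ≤ z) then
              (ArithmeticFunction.moebius d : ℝ) * s.selbergTerms m / L else 0)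
          = if m = l then (if l ≤ z then (ArithmeticFunction.moebius l : ℝ) * s.selbergTerms l / L else 0)
            else 0 := by
        intro m hm
        have hmP := Nat.dvd_of_mem_divisors hm
        by_cases hmz : m ≤ z
        · have : (∑ d ∈ P.divisors, if (l ∣ d ∧ d ∣ m ∧ m ≤ z) then
              (ArithmeticFunction.moebius d : ℝ) * s.selbergTerms m / L else 0)
              = (∑ d ∈ m.divisors with l ∣ d, (ArithmeticFunction.moebius d : ℝ)) *
                (s.selbergTerms m / L) := by
            rw [sum_mul, ← Nat.divisors_filter_dvd_of_dvd hP0 hmP, filter_filter, sum_filter]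
            apply sum_congr rfl
            intro d _
            simp only [hmz, true_and, and_comm, mul_div_assoc]
          rw [this]
          by_cases hlm : l ∣ m
          · rw [sum_moebius_between (BoundingSieve.squarefree_of_dvd_prodPrimes hmP) hlm]
            by_cases h : l = m
            · subst h; simp [hmz, mul_div_assoc]
            · simp [h, Ne.symm h]
          · have h1 : m ≠ l := by rintro rfl; exact hlm dvd_rfl
            rw [if_neg h1, sum_eq_zero, zero_mul]
            intro d hd
            simp only [mem_filter] at hd
            exact absurd (hd.2.trans (Nat.dvd_of_mem_divisors hd.1)) hlm
        · rw [sum_eq_zero]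
          · split_ifs with h1 h2
            · omega
            · rfl
            · rfl
          · intro d _; simp [hmz]
      rw [sum_congr rfl e2, sum_ite_eq_of_mem' _ _ _ hl]
    have e3 : ∀ l ∈ P.divisors, (s.selbergTerms l)⁻¹ *
        (∑ d ∈ P.divisors, if l ∣ d then s.nu d * w d else 0) ^ 2
        = if l ≤ z then s.selbergTerms l / L ^ 2 else 0 := by
      intro l hl
      rw [key l hl]
      split_ifs
      · have hmu : (ArithmeticFunction.moebius l : ℝ) ^ 2 = 1 := by
          have := ArithmeticFunction.moebius_sq_eq_one_of_squarefree
            (BoundingSieve.squarefree_of_mem_divisors_prodPrimes (s := s) hl)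
          exact_mod_cast this
        rw [div_pow, mul_pow, hmu]
        have := (hgpos l hl).ne'
        field_simp
      · simp
    rw [sum_congr rfl e3, ← sum_filter, ← sum_div, ← hL]
    field_simp
  have herr : s.errSum (BoundingSieve.lambdaSquared w) ≤ (z:ℝ)^6 := by
    unfold BoundingSieve.errSum
    have hsub : ∀ d ∈ P.divisors, |BoundingSieve.lambdaSquared w d| * |s.rem d|
        ≤ ∑ d1 ∈ P.divisors, ∑ d2 ∈ P.divisors, if d = Nat.lcm d1 d2 then
          |w d1| * |w d2| * |s.rem d| else 0 := by
      intro d hd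
      have hsubs : d.divisors ⊆ P.divisors := Nat.divisors_subset_of_dvd hP0 (Nat.dvd_of_mem_divisors hd)
      unfold BoundingSieve.lambdaSquared
      calc _ ≤ (∑ d1 ∈ d.divisors, ∑ d2 ∈ d.divisors, if d = Nat.lcm d1 d2 then
                |w d1| * |w d2| else 0) * |s.rem d| := by
            gcongr
            refine (abs_sum_le_sum_abs _ _).trans (sum_le_sum fun d1 _ => ?_)
            refine (abs_sum_le_sum_abs _ _).trans (sum_le_sum fun d2 _ => ?_)
            split_ifs
            · rw [abs_mul]
            · simp
        _ = ∑ d1 ∈ d.divisors, ∑ d2 ∈ d.divisors, if d = Nat.lcm d1 d2 then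
                |w d1| * |w d2| * |s.rem d| else 0 := by
            simp_rw [sum_mul, ite_mul, zero_mul]
        _ ≤ ∑ d1 ∈ d.divisors, ∑ d2 ∈ P.divisors, if d = Nat.lcm d1 d2 then
                |w d1| * |w d2| * |s.rem d| else 0 := by
            apply sum_le_sum
            intro d1 _
            apply sum_le_sum_of_subset_of_nonneg hsubs
            intros; split_ifs <;> positivity
        _ ≤ _ := by
            apply sum_le_sum_of_subset_of_nonneg hsubs
            intros
            apply sum_nonneg
            intros; split_ifs <;> positivity
    refine (sum_le_sum hsub).trans ?_
    rw [sum_comm]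
    have hin : ∀ d1 ∈ P.divisors, (∑ d ∈ P.divisors, ∑ d2 ∈ P.divisors, if d = Nat.lcm d1 d2 then
          |w d1| * |w d2| * |s.rem d| else 0) ≤
          ∑ d2 ∈ P.divisors, if d1 ≤ z then (if d2 ≤ z then (z:ℝ)^4 else 0) else 0 := by
      intro d1 hd1
      rw [sum_comm]
      apply sum_le_sum
      intro d2 hd2
      have hlcm : d1.lcm d2 ∈ P.divisors := by
        rw [Nat.mem_divisors]
        exact ⟨Nat.lcm_dvd (Nat.dvd_of_mem_divisors hd1) (Nat.dvd_of_mem_divisors hd2), hP0⟩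
      rw [sum_ite_eq_of_mem' _ _ _ hlcm]
      have a1 := hwabs d1 hd1
      have a2 := hwabs d2 hd2
      have a3 := hrem _ (Nat.dvd_of_mem_divisors hlcm)
      by_cases h1 : d1 ≤ z
      · by_cases h2 : d2 ≤ z
        · simp only [h1, h2, if_true] at a1 a2 ⊢
          have a4 : ((d1.lcm d2 : ℕ) : ℝ) ≤ (z:ℝ) * z := by
            have : d1.lcm d2 ≤ z * z := (Nat.le_of_dvd (Nat.mul_pos (Nat.pos_of_mem_divisors hd1)
              (Nat.pos_of_mem_divisors hd2)) (Nat.lcm_dvd_mul d1 d2)).trans (Nat.mul_le_mul h1 h2)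
            exact_mod_cast this
          calc _ ≤ (z:ℝ) * z * (z * z) := by
                gcongr
                exact a3.trans a4
            _ = _ := by ring
        · simp only [h2, if_false] at a2
          have : |w d2| = 0 := le_antisymm a2 (abs_nonneg _)
          simp [this, h2]
      · simp only [h1, if_false] at a1
        have : |w d1| = 0 := le_antisymm a1 (abs_nonneg _)
        simp [this, h1]
    refine (sum_le_sum hin).trans ?_
    have hcard : (∑ d ∈ P.divisors, if d ≤ z then (1:ℝ) else 0) ≤ z := by
      rw [← sum_filter, sum_const, nsmul_eq_mul, mul_one]
      have : #{d ∈ P.divisors | d ≤ z} ≤ #(Finset.Icc 1 z) := by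
        apply card_le_card
        intro d hd
        simp only [mem_filter] at hd
        exact mem_Icc.2 ⟨Nat.pos_of_mem_divisors hd.1, hd.2⟩
      rw [Nat.card_Icc] at this
      exact_mod_cast this
    have hc0 : 0 ≤ (∑ d ∈ P.divisors, if d ≤ z then (1:ℝ) else 0) := by
      apply sum_nonneg; intros; split_ifs <;> norm_num
    calc _ = (∑ d ∈ P.divisors, if d ≤ z then (1:ℝ) else 0) *
              (∑ d ∈ P.divisors, if d ≤ z then (1:ℝ) else 0) * (z:ℝ)^4 := by
            rw [sum_mul_sum, sum_mul]
            apply sum_congr rfl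
            intro d1 _
            rw [sum_mul]
            apply sum_congr rfl
            intro d2 _
            split_ifs <;> simp
      _ ≤ (z:ℝ) * z * z^4 := by gcongr
      _ = _ := by ring
  have := BoundingSieve.siftedSum_le_mainSum_errSum_of_upperMoebius (s := s) _
    (BoundingSieve.upperMoebius_lambdaSquared w hw1)
  rw [hmain] at this
  calc _ ≤ _ := this
    _ ≤ _ := by
      rw [mul_one_div]
      gcongr

end Pf


namespace Pf

/-- Truncated Euler product. -/
noncomputable def tsumF (g : ℕ → ℝ) (S : Finset ℕ) (y : ℕ) : ℝ :=
  ∑ T ∈ S.powerset, if (∏ p ∈ T, p) ≤ y then ∏ p ∈ T, g p else 0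

lemma tsumF_insert (g : ℕ → ℝ) (S : Finset ℕ) (y p : ℕ) (hp : p ∉ S) (hp0 : 0 < p) :
    tsumF g (insert p S) y = tsumF g S y + g p * tsumF g S (y / p) := by
  unfold tsumF
  rw [sum_powerset_insert hp, mul_sum]
  congr 1
  apply sum_congr rfl
  intro T hT
  have hpT : p ∉ T := fun h => hp (mem_powerset.1 hT h)
  rw [prod_insert hpT, prod_insert hpT]
  have : p * ∏ q ∈ T, q ≤ y ↔ ∏ q ∈ T, q ≤ y / p := by
    rw [Nat.le_div_iff_mul_le hp0, mul_comm]
  simp only [this, mul_ite, mul_zero]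

lemma tsumF_nonneg (g : ℕ → ℝ) (S : Finset ℕ) (hg : ∀ p ∈ S, 0 ≤ g p) (y : ℕ) :
    0 ≤ tsumF g S y := by
  unfold tsumF
  apply sum_nonneg
  intro T hT
  split_ifs
  · exact prod_nonneg fun p hp => hg p (mem_powerset.1 hT hp)
  · rfl

lemma tsumF_mono (g : ℕ → ℝ) (S : Finset ℕ) (hg : ∀ p ∈ S, 0 ≤ g p) {y y' : ℕ} (h : y ≤ y') :
    tsumF g S y ≤ tsumF g S y' := by
  unfold tsumF
  apply sum_le_sum
  intro T hT
  have := prod_nonneg fun p hp => hg p (mem_powerset.1 hT hp)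
  split_ifs
  · rfl
  · omega
  · exact this
  · rfl

lemma tsumF_cube (D : Finset ℕ) (g a : ℕ → ℝ) (S : Finset ℕ)
    (hp : ∀ p ∈ S, 0 < p) (ha : ∀ p ∈ S, 0 ≤ a p)
    (hg : ∀ p ∈ S, p ∉ D → (1 + a p) ^ 3 - 1 ≤ g p) (y₁ y₂ y₃ : ℕ) :
    tsumF a S y₁ * tsumF a S y₂ * tsumF a S y₃ ≤
      tsumF g (S \ D) (y₁ * y₂ * y₃) * ∏ p ∈ S ∩ D, (1 + a p) ^ 3 := by
  classical
  induction S using Finset.induction_on generalizing y₁ y₂ y₃ with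
  | empty =>
    simp only [tsumF, empty_sdiff, powerset_empty, sum_singleton, prod_empty, empty_inter, mul_one]
    by_cases h : 1 ≤ y₁ ∧ 1 ≤ y₂ ∧ 1 ≤ y₃
    · obtain ⟨h1, h2, h3⟩ := h
      have h4 : 1 ≤ y₁ * y₂ * y₃ := Nat.mul_pos (Nat.mul_pos h1 h2) h3
      simp [h1, h2, h3, h4]
    · have h' : y₁ = 0 ∨ y₂ = 0 ∨ y₃ = 0 := by omega
      rcases h' with rfl | rfl | rfl <;> simp
  | insert p S hpS ih =>
    have hp' : ∀ q ∈ S, 0 < q := fun q hq => hp q (mem_insert_of_mem hq)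
    have ha' : ∀ q ∈ S, 0 ≤ a q := fun q hq => ha q (mem_insert_of_mem hq)
    have hg' : ∀ q ∈ S, q ∉ D → (1 + a q) ^ 3 - 1 ≤ g q := fun q hq => hg q (mem_insert_of_mem hq)
    have ih := ih hp' ha' hg'
    have hp0 : 0 < p := hp p (mem_insert_self _ _)
    have ha0 : 0 ≤ a p := ha p (mem_insert_self _ _)
    have hgpos : ∀ q ∈ S \ D, 0 ≤ g q := by
      intro q hq
      rw [mem_sdiff] at hq
      have h1 := hg' q hq.1 hq.2
      have h2 := ha' q hq.1
      have h3 : 1 ≤ (1 + a q)^3 := one_le_pow₀ (by linarith)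
      linarith
    set K : ℝ := ∏ q ∈ S ∩ D, (1 + a q) ^ 3 with hK
    have hKpos : 0 ≤ K := prod_nonneg fun q hq => by
      have := ha' q (mem_inter.1 hq).1
      positivity
    rw [tsumF_insert a S y₁ p hpS hp0, tsumF_insert a S y₂ p hpS hp0, tsumF_insert a S y₃ p hpS hp0]
    set Y := y₁ * y₂ * y₃
    have hY : ∀ n, n * p ≤ Y → tsumF g (S \ D) n * K ≤ tsumF g (S \ D) (Y / p) * K := by
      intro n hn
      apply mul_le_mul_of_nonneg_right _ hKpos
      exact tsumF_mono g _ hgpos ((Nat.le_div_iff_mul_le hp0).2 hn)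
    have d1 : y₁ / p * p ≤ y₁ := Nat.div_mul_le_self _ _
    have d2 : y₂ / p * p ≤ y₂ := Nat.div_mul_le_self _ _
    have d3 : y₃ / p * p ≤ y₃ := Nat.div_mul_le_self _ _
    have c1 : y₁ / p ≤ y₁ := Nat.div_le_self _ _
    have c2 : y₂ / p ≤ y₂ := Nat.div_le_self _ _
    have c3 : y₃ / p ≤ y₃ := Nat.div_le_self _ _
    have i0 := ih y₁ y₂ y₃
    have i1 := (ih (y₁/p) y₂ y₃).trans (hY _ (by
      calc _ = (y₁ / p * p) * y₂ * y₃ := by ring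
        _ ≤ y₁ * y₂ * y₃ := by gcongr))
    have i2 := (ih y₁ (y₂/p) y₃).trans (hY _ (by
      calc _ = y₁ * (y₂ / p * p) * y₃ := by ring
        _ ≤ y₁ * y₂ * y₃ := by gcongr))
    have i3 := (ih y₁ y₂ (y₃/p)).trans (hY _ (by
      calc _ = y₁ * y₂ * (y₃ / p * p) := by ring
        _ ≤ y₁ * y₂ * y₃ := by gcongr))
    have i12 := (ih (y₁/p) (y₂/p) y₃).trans (hY _ (by
      calc _ = (y₁ / p * p) * (y₂/p) * y₃ := by ring
        _ ≤ y₁ * y₂ * y₃ := by gcongr))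
    have i13 := (ih (y₁/p) y₂ (y₃/p)).trans (hY _ (by
      calc _ = (y₁ / p * p) * y₂ * (y₃/p) := by ring
        _ ≤ y₁ * y₂ * y₃ := by gcongr))
    have i23 := (ih y₁ (y₂/p) (y₃/p)).trans (hY _ (by
      calc _ = y₁ * (y₂ / p * p) * (y₃/p) := by ring
        _ ≤ y₁ * y₂ * y₃ := by gcongr))
    have i123 := (ih (y₁/p) (y₂/p) (y₃/p)).trans (hY _ (by
      calc _ = (y₁ / p * p) * (y₂/p) * (y₃/p) := by ring
        _ ≤ y₁ * y₂ * y₃ := by gcongr))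
    have hbig : (tsumF a S y₁ + a p * tsumF a S (y₁ / p)) * (tsumF a S y₂ + a p * tsumF a S (y₂ / p))
        * (tsumF a S y₃ + a p * tsumF a S (y₃ / p)) ≤
        tsumF g (S \ D) Y * K + ((1 + a p)^3 - 1) * (tsumF g (S \ D) (Y / p) * K) := by
      have j1 := mul_le_mul_of_nonneg_left i1 ha0
      have j2 := mul_le_mul_of_nonneg_left i2 ha0
      have j3 := mul_le_mul_of_nonneg_left i3 ha0
      have j12 := mul_le_mul_of_nonneg_left i12 (pow_nonneg ha0 2)
      have j13 := mul_le_mul_of_nonneg_left i13 (pow_nonneg ha0 2)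
      have j23 := mul_le_mul_of_nonneg_left i23 (pow_nonneg ha0 2)
      have j123 := mul_le_mul_of_nonneg_left i123 (pow_nonneg ha0 3)
      linarith
    refine hbig.trans ?_
    have hq1 : 0 ≤ (1 + a p)^3 - 1 := by
      have : 1 ≤ (1 + a p)^3 := one_le_pow₀ (by linarith)
      linarith
    by_cases hpD : p ∈ D
    · rw [insert_sdiff_of_mem _ hpD, insert_inter_of_mem hpD, prod_insert (by simp [hpS]), ← hK]
      have : tsumF g (S \ D) (Y / p) * K ≤ tsumF g (S \ D) Y * K :=
        mul_le_mul_of_nonneg_right (tsumF_mono g _ hgpos (Nat.div_le_self _ _)) hKpos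
      have := mul_le_mul_of_nonneg_left this hq1
      linarith
    · rw [insert_sdiff_of_notMem _ hpD, insert_inter_of_notMem hpD, ← hK,
        tsumF_insert _ _ _ _ (by simp [hpS]) hp0]
      have h0 : 0 ≤ tsumF g (S \ D) (Y / p) * K := mul_nonneg (tsumF_nonneg _ _ hgpos _) hKpos
      have := mul_le_mul_of_nonneg_right (hg p (mem_insert_self _ _) hpD) h0
      linarith

/-- The harmonic sum over `S`-factored numbers is at most the truncated Euler product. -/
lemma harm_le (S : Finset ℕ) (hS : ∀ p ∈ S, p.Prime) (y : ℕ) :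
    ∑ n ∈ Icc 1 y with n.primeFactors ⊆ S, (1:ℝ) / n ≤ tsumF (fun p => 1 / ((p:ℝ) - 1)) S y := by
  classical
  induction S using Finset.induction_on generalizing y with
  | empty =>
    rcases Nat.eq_zero_or_pos y with rfl | hy
    · simp [tsumF]
    · have : ((Icc 1 y).filter fun n => n.primeFactors ⊆ (∅ : Finset ℕ)) = {1} := by
        ext n
        simp only [mem_filter, mem_Icc, subset_empty, Nat.primeFactors_eq_empty, mem_singleton]
        omega
      rw [this]
      have hy' : 1 ≤ y := hy
      simp [tsumF, hy']
  | insert p S hpS ih =>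
    have hpp : p.Prime := hS p (mem_insert_self _ _)
    have hS' : ∀ q ∈ S, q.Prime := fun q hq => hS q (mem_insert_of_mem hq)
    have hp1 : (1:ℝ) < p := by exact_mod_cast hpp.one_lt
    set a : ℕ → ℝ := fun p => 1 / ((p:ℝ) - 1) with ha
    have hapos : ∀ q ∈ S, 0 ≤ a q := by
      intro q hq
      have : (1:ℝ) < q := by exact_mod_cast (hS' q hq).one_lt
      simp only [ha]
      apply div_nonneg <;> linarith
    have hap : 0 ≤ a p := by
      simp only [ha]; apply div_nonneg <;> linarith
    induction y using Nat.strong_induction_on with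
    | _ y ihy =>
      rcases Nat.eq_zero_or_pos y with rfl | hy
      · simp only [show Icc 1 0 = (∅ : Finset ℕ) by rfl, filter_empty, sum_empty]
        apply tsumF_nonneg
        intro q hq
        rcases mem_insert.1 hq with rfl | h
        · exact hap
        · exact hapos q h
      rw [tsumF_insert _ _ _ _ hpS hpp.pos]
      have hsplit : ∑ n ∈ Icc 1 y with n.primeFactors ⊆ insert p S, (1:ℝ) / n
          ≤ (∑ n ∈ Icc 1 y with n.primeFactors ⊆ S, (1:ℝ) / n) +
            ∑ m ∈ Icc 1 (y / p) with m.primeFactors ⊆ insert p S, (1:ℝ) / ((p * m : ℕ) : ℝ) := by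
        have hsub : ((Icc 1 y).filter fun n => n.primeFactors ⊆ insert p S) ⊆
            ((Icc 1 y).filter fun n => n.primeFactors ⊆ S) ∪
            (((Icc 1 (y/p)).filter fun n => n.primeFactors ⊆ insert p S).image fun m => p * m) := by
          intro n hn
          simp only [mem_filter, mem_Icc, mem_union, mem_image] at hn ⊢
          by_cases hpn : p ∣ n
          · right
            obtain ⟨m, rfl⟩ := hpn
            have hm0 : m ≠ 0 := by rintro rfl; simp at hn
            refine ⟨m, ⟨⟨Nat.pos_of_ne_zero hm0, ?_⟩, ?_⟩, rfl⟩
            · rw [Nat.le_div_iff_mul_le hpp.pos, mul_comm]; exact hn.1.2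
            · exact (Nat.primeFactors_mono (Dvd.intro_left p rfl) (mul_ne_zero hpp.ne_zero hm0)).trans hn.2
          · left
            refine ⟨hn.1, fun q hq => ?_⟩
            rcases mem_insert.1 (hn.2 hq) with rfl | h
            · exact absurd (Nat.dvd_of_mem_primeFactors hq) hpn
            · exact h
        refine (sum_le_sum_of_subset_of_nonneg hsub (fun _ _ _ => by positivity)).trans ?_
        rw [← sum_image (f := fun n : ℕ => (1:ℝ) / n) (s := (Icc 1 (y / p)).filter fun m => m.primeFactors ⊆ insert p S) (g := fun m => p * m) (fun x _ x' _ h => Nat.eq_of_mul_eq_mul_left hpp.pos h), ← sum_union_inter]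
        exact le_add_of_nonneg_right (sum_nonneg fun _ _ => by positivity)
      refine hsplit.trans (add_le_add (ih hS' y) ?_)
      have hlt : y / p < y := Nat.div_lt_self hy hpp.one_lt
      have h1 := ihy _ hlt
      rw [tsumF_insert _ _ _ _ hpS hpp.pos] at h1
      have h2 : tsumF a S (y / p / p) ≤ tsumF a S (y / p) := tsumF_mono _ _ hapos (Nat.div_le_self _ _)
      have h3 : ∑ m ∈ Icc 1 (y / p) with m.primeFactors ⊆ insert p S, (1:ℝ) / ((p * m : ℕ) : ℝ)
          = (1 / (p:ℝ)) * ∑ m ∈ Icc 1 (y / p) with m.primeFactors ⊆ insert p S, (1:ℝ) / m := by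
        rw [mul_sum]
        apply sum_congr rfl
        intro m _
        push_cast
        rw [one_div_mul_one_div]
      rw [h3]
      have h4 : a p = 1 / (p:ℝ) * (1 + a p) := by
        simp only [ha]
        have : (p:ℝ) - 1 ≠ 0 := by linarith
        field_simp
        ring
      calc _ ≤ 1 / (p:ℝ) * (tsumF a S (y / p) + a p * tsumF a S (y / p)) := by
            gcongr
            exact h1.trans (by gcongr)
        _ = (1 / (p:ℝ) * (1 + a p)) * tsumF a S (y / p) := by ring
        _ = _ := by rw [← h4]

end Pf


namespace Pf

lemma card_roots (k₁ k₂ : ℕ) (hk : k₁ < k₂) (d : ℕ) (hd : Squarefree d)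
    (hgood : ∀ p, p.Prime → p ∣ d → ¬ p ∣ k₁ ∧ ¬ p ∣ k₂ ∧ ¬ p ∣ (k₂ - k₁)) :
    Nat.card {a : ZMod d // a * (a + k₁) * (a + k₂) = 0} = 3 ^ d.primeFactors.card := by
  induction d using induction_on_primes with
  | zero => exact absurd hd (by simp)
  | one =>
    have : Unique {a : ZMod 1 // a * (a + k₁) * (a + k₂) = 0} :=
      ⟨⟨⟨0, Subsingleton.elim _ _⟩⟩, fun x => Subtype.ext (Subsingleton.elim _ _)⟩
    rw [Nat.card_unique]
    simp
  | prime_mul p m hp ih =>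
    have hcop : Nat.Coprime p m := Nat.coprime_of_squarefree_mul hd
    have hm0 : m ≠ 0 := right_ne_zero_of_mul hd.ne_zero
    have ih' := ih (hd.squarefree_of_dvd (Dvd.intro_left p rfl))
      (fun q hq hqm => hgood q hq (hqm.mul_left p))
    have hpfac : (p * m).primeFactors.card = m.primeFactors.card + 1 := by
      rw [hcop.primeFactors_mul, card_union_of_disjoint hcop.disjoint_primeFactors,
        hp.primeFactors, card_singleton, add_comm]
    rw [hpfac, pow_succ, ← ih']
    have hp3 : Nat.card {a : ZMod p // a * (a + k₁) * (a + k₂) = 0} = 3 := by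
      have : Fact p.Prime := ⟨hp⟩
      obtain ⟨h1, h2, h3⟩ := hgood p hp (Dvd.intro m rfl)
      have e1 : (k₁ : ZMod p) ≠ 0 := by rwa [Ne, ZMod.natCast_eq_zero_iff]
      have e2 : (k₂ : ZMod p) ≠ 0 := by rwa [Ne, ZMod.natCast_eq_zero_iff]
      have e3 : (k₁ : ZMod p) ≠ k₂ := by
        intro h
        apply h3
        rw [← ZMod.natCast_eq_zero_iff, Nat.cast_sub hk.le, h, sub_self]
      have hset : {a : ZMod p | a * (a + k₁) * (a + k₂) = 0}
          = (({0, -(k₁ : ZMod p), -(k₂ : ZMod p)} : Finset (ZMod p)) : Set (ZMod p)) := by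
        ext a
        simp only [Set.mem_ofPred_eq, mul_eq_zero, coe_insert, coe_singleton, Set.mem_insert_iff,
          Set.mem_singleton_iff, add_eq_zero_iff_eq_neg, or_assoc]
      have : Nat.card {a : ZMod p // a * (a + k₁) * (a + k₂) = 0}
          = Set.ncard {a : ZMod p | a * (a + k₁) * (a + k₂) = 0} := rfl
      rw [this, hset, Set.ncard_coe_finset, card_insert_of_notMem, card_insert_of_notMem, card_singleton]
      · simpa using e3
      · simp only [mem_insert, mem_singleton, not_or]
        exact ⟨fun h => e1 (by simpa using h.symm), fun h => e2 (by simpa using h.symm)⟩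
    rw [mul_comm (Nat.card _), ← hp3, ← Nat.card_prod]
    let e := ZMod.chineseRemainder hcop
    refine Nat.card_congr ⟨fun a => (⟨(e a.1).1, ?_⟩, ⟨(e a.1).2, ?_⟩),
      fun b => ⟨e.symm (b.1.1, b.2.1), ?_⟩, fun a => ?_, fun b => ?_⟩
    · have := congrArg (fun x => (e x).1) a.2
      simpa using this
    · have := congrArg (fun x => (e x).2) a.2
      simpa using this
    · apply e.injective
      simp only [map_mul, map_add, map_natCast, map_zero, RingEquiv.apply_symm_apply]
      ext
      · simpa using b.1.2
      · simpa using b.2.2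
    · apply Subtype.ext
      simp
    · ext <;> simp

lemma class_count (N d a : ℕ) (hd : 0 < d) :
    |((#{n ∈ Ioc N (2 * N) | n ≡ a [MOD d]} : ℕ) : ℝ) - (N : ℝ) / d| ≤ 1 := by
  have h := Nat.Ioc_filter_modEq_card N (2*N) hd a
  have hle : ⌊((N:ℚ) - a) / (d:ℚ)⌋ ≤ ⌊(((2*N : ℕ):ℚ) - a) / (d:ℚ)⌋ := by
    apply Int.floor_le_floor
    have : (N:ℚ) ≤ ((2*N : ℕ):ℚ) := by exact_mod_cast (by omega)
    gcongr
  rw [max_eq_left (by linarith)] at h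
  have h1 := Int.floor_le (((N:ℚ) - a) / (d:ℚ))
  have h2 := Int.lt_floor_add_one (((N:ℚ) - a) / (d:ℚ))
  have h3 := Int.floor_le ((((2*N : ℕ):ℚ) - a) / (d:ℚ))
  have h4 := Int.lt_floor_add_one ((((2*N : ℕ):ℚ) - a) / (d:ℚ))
  have hq : ((#{n ∈ Ioc N (2 * N) | n ≡ a [MOD d]} : ℕ) : ℚ) =
      (⌊(((2*N : ℕ):ℚ) - a) / (d:ℚ)⌋ : ℚ) - (⌊((N:ℚ) - a) / (d:ℚ)⌋ : ℚ) := by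
    exact_mod_cast h
  have he : (((2*N : ℕ):ℚ) - a) / (d:ℚ) - ((N:ℚ) - a) / (d:ℚ) = (N:ℚ) / d := by
    push_cast; ring
  have : |((#{n ∈ Ioc N (2 * N) | n ≡ a [MOD d]} : ℕ) : ℚ) - (N : ℚ) / d| ≤ 1 := by
    rw [abs_le]
    constructor <;> linarith
  have h' := (Rat.cast_le (K := ℝ)).2 this
  push_cast at h'
  exact h'

lemma rem_bound (k₁ k₂ : ℕ) (hk : k₁ < k₂) (d N : ℕ) (hd : Squarefree d)
    (hgood : ∀ p, p.Prime → p ∣ d → ¬ p ∣ k₁ ∧ ¬ p ∣ k₂ ∧ ¬ p ∣ (k₂ - k₁)) :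
    |((#{n ∈ Ioc N (2 * N) | d ∣ n * (n + k₁) * (n + k₂)} : ℕ) : ℝ)
      - 3 ^ d.primeFactors.card / d * N| ≤ 3 ^ d.primeFactors.card := by
  classical
  have hd0 : 0 < d := Nat.pos_of_ne_zero hd.ne_zero
  have : NeZero d := ⟨hd.ne_zero⟩
  let R : Finset (ZMod d) := univ.filter fun a => a * (a + k₁) * (a + k₂) = 0
  have hR : #R = 3 ^ d.primeFactors.card := by
    rw [← card_roots k₁ k₂ hk d hd hgood, Nat.card_eq_fintype_card, Fintype.card_subtype]
  have hsum : #{n ∈ Ioc N (2 * N) | d ∣ n * (n + k₁) * (n + k₂)}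
      = ∑ a ∈ R, #{n ∈ Ioc N (2 * N) | n ≡ a.val [MOD d]} := by
    have hmem : ∀ n : ℕ, d ∣ n * (n + k₁) * (n + k₂) ↔ (n : ZMod d) ∈ R := by
      intro n
      rw [← ZMod.natCast_eq_zero_iff]
      simp [R]
    rw [card_eq_sum_card_fiberwise (f := fun n : ℕ => (n : ZMod d)) (t := R)]
    · apply sum_congr rfl
      intro a ha
      congr 1
      ext n
      simp only [mem_filter, hmem]
      rw [← ZMod.natCast_eq_natCast_iff, ZMod.natCast_zmod_val]
      constructor
      · rintro ⟨⟨h1, _⟩, h3⟩; exact ⟨h1, h3⟩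
      · rintro ⟨h1, h3⟩; exact ⟨⟨h1, h3 ▸ ha⟩, h3⟩
    · intro n hn
      simp only [coe_filter, Set.mem_ofPred_eq] at hn
      exact (hmem n).1 hn.2
  rw [hsum]
  have hR' : (3:ℝ) ^ d.primeFactors.card = (#R : ℝ) := by rw [hR]; norm_num
  rw [hR']
  have : ((∑ a ∈ R, #{n ∈ Ioc N (2 * N) | n ≡ a.val [MOD d]} : ℕ) : ℝ) - (#R : ℝ) / d * N
      = ∑ a ∈ R, (((#{n ∈ Ioc N (2 * N) | n ≡ a.val [MOD d]} : ℕ) : ℝ) - (N : ℝ) / d) := by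
    rw [sum_sub_distrib, sum_const, nsmul_eq_mul]
    push_cast
    ring
  rw [this]
  refine (abs_sum_le_sum_abs _ _).trans ?_
  calc _ ≤ ∑ a ∈ R, (1:ℝ) := sum_le_sum fun a _ => class_count N d a.val hd0
    _ = _ := by simp

end Pf


namespace Pf

noncomputable def triF (k₁ k₂ n : ℕ) : ℕ := n * (n + k₁) * (n + k₂)

lemma triF_inj (k₁ k₂ : ℕ) : Function.Injective (triF k₁ k₂) := by
  apply StrictMono.injective
  intro a b hab
  unfold triF
  have h1 : a * (a + k₁) < b * (b + k₁) := by
    have : a * (a + k₁) ≤ a * (b + k₁) := by gcongr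
    have : a * (b + k₁) < b * (b + k₁) := Nat.mul_lt_mul_of_pos_right hab (by omega)
    omega
  calc _ ≤ a * (a + k₁) * (b + k₂) := by gcongr
    _ < _ := Nat.mul_lt_mul_of_pos_right h1 (by omega)

noncomputable def nu3 : ArithmeticFunction ℝ :=
  ArithmeticFunction.prodPrimeFactors (fun p => (3:ℝ) / p)

lemma nu3_apply {d : ℕ} (hd : Squarefree d) : nu3 d = 3 ^ d.primeFactors.card / d := by
  unfold nu3
  rw [ArithmeticFunction.prodPrimeFactors_apply hd.ne_zero, prod_div_distrib, prod_const]
  congr 1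
  have := Nat.prod_primeFactors_of_squarefree hd
  have h2 : ((∏ p ∈ d.primeFactors, p : ℕ) : ℝ) = (d : ℝ) := by rw [this]
  rw [← h2]; push_cast; rfl

lemma nu3_prime {p : ℕ} (hp : p.Prime) : nu3 p = 3 / p := by
  rw [nu3_apply hp.prime.squarefree, hp.primeFactors]; simp

lemma three_pow_le {d : ℕ} (hd : Squarefree d) (h : ∀ p ∈ d.primeFactors, 3 ≤ p) :
    (3:ℝ) ^ d.primeFactors.card ≤ d := by
  have h1 : 3 ^ d.primeFactors.card ≤ d := by
    calc _ = ∏ p ∈ d.primeFactors, 3 := by rw [prod_const]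
      _ ≤ ∏ p ∈ d.primeFactors, p := prod_le_prod' h
      _ = d := Nat.prod_primeFactors_of_squarefree hd
  exact_mod_cast h1

lemma one_le_prod_real {Q : Finset ℕ} {f : ℕ → ℝ} (hf : ∀ p ∈ Q, 1 ≤ f p) : 1 ≤ ∏ p ∈ Q, f p := by
  calc (1:ℝ) = ∏ p ∈ Q, 1 := by simp
    _ ≤ _ := prod_le_prod (fun _ _ => zero_le_one) hf

lemma prod_subset_le {Q Q' : Finset ℕ} {f : ℕ → ℝ} (h : Q ⊆ Q') (hf : ∀ p ∈ Q', 1 ≤ f p) :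
    ∏ p ∈ Q, f p ≤ ∏ p ∈ Q', f p := by
  classical
  rw [← prod_sdiff h]
  have h1 : 1 ≤ ∏ p ∈ Q' \ Q, f p := one_le_prod_real fun p hp => hf p (mem_sdiff.1 hp).1
  have h2 : 1 ≤ ∏ p ∈ Q, f p := one_le_prod_real fun p hp => hf p (h hp)
  exact le_mul_of_one_le_left (by linarith) h1

noncomputable def badK (m : ℕ) : ℝ := ∏ p ∈ m.primeFactors, (1 + 1 / ((p:ℝ) - 1)) ^ 3

lemma squarefree_prod_primes (Q : Finset ℕ) (hQ : ∀ p ∈ Q, p.Prime) : Squarefree (∏ p ∈ Q, p) := by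
  apply Finset.squarefree_prod_of_pairwise_isCoprime
  · intro a ha b hb hab
    exact Nat.coprime_iff_isRelPrime.1 ((Nat.coprime_primes (hQ a ha) (hQ b hb)).2 hab)
  · intro p hp
    exact (hQ p hp).prime.squarefree

lemma prime_dvd_prod_primes {Q : Finset ℕ} (hQ : ∀ p ∈ Q, p.Prime) {p : ℕ} (hp : p.Prime)
    (h : p ∣ ∏ q ∈ Q, q) : p ∈ Q := by
  obtain ⟨q, hq, hpq⟩ := (Prime.dvd_finsetProd_iff hp.prime _).1 h
  rwa [(Nat.prime_dvd_prime_iff_eq hp (hQ q hq)).1 hpq]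

theorem triple_bound (k₁ k₂ N y : ℕ) (h0 : 0 < k₁) (hk : k₁ < k₂) (hy : 2 ≤ y) (hyN : y ^ 3 ≤ N) :
    ((#{n ∈ Ioc N (2 * N) | n.Prime ∧ (n + k₁).Prime ∧ (n + k₂).Prime} : ℕ) : ℝ) ≤
      N * badK (6 * (k₁ * k₂ * (k₂ - k₁))) / (Real.log y) ^ 3 + (y:ℝ) ^ 18 := by
  classical
  set E := 6 * (k₁ * k₂ * (k₂ - k₁)) with hE
  have hE0 : E ≠ 0 := by
    have : k₂ - k₁ ≠ 0 := by omega
    have : k₂ ≠ 0 := by omega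
    have : k₁ ≠ 0 := by omega
    simp [hE, *]
  set D := E.primeFactors with hD
  set z := y ^ 3 with hz
  set S := (range (z + 1)).filter Nat.Prime with hS
  have hSp : ∀ p ∈ S, p.Prime := fun p hp => (mem_filter.1 hp).2
  have hQp : ∀ p ∈ S \ D, p.Prime := fun p hp => hSp p (mem_sdiff.1 hp).1
  set P := ∏ p ∈ S \ D, p with hP
  have hPsq : Squarefree P := squarefree_prod_primes _ hQp
  have hPmem : ∀ p, p.Prime → p ∣ P → p ∈ S \ D := fun p hp h => prime_dvd_prod_primes hQp hp h
  have hgood : ∀ p, p.Prime → p ∣ P → ¬ p ∣ E := by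
    intro p hp h hpE
    exact (mem_sdiff.1 (hPmem p hp h)).2 (Nat.mem_primeFactors.2 ⟨hp, hpE, hE0⟩)
  have hp5 : ∀ p, p.Prime → p ∣ P → 5 ≤ p := by
    intro p hp h
    have hg := hgood p hp h
    by_contra hlt
    have : p = 2 ∨ p = 3 := by
      have := hp.two_le
      have h4 : p ≠ 4 := by rintro rfl; revert hp; decide
      omega
    apply hg
    have : p ∣ 6 := by rcases this with rfl | rfl <;> norm_num
    exact this.mul_right _
  let s : BoundingSieve :=
    { support := (Ioc N (2 * N)).image (triF k₁ k₂)
      prodPrimes := P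
      prodPrimes_squarefree := hPsq
      weights := fun _ => 1
      weights_nonneg := fun _ => zero_le_one
      totalMass := N
      nu := nu3
      nu_mult := ArithmeticFunction.IsMultiplicative.prodPrimeFactors _
      nu_pos_of_prime := by
        intro p hp _
        rw [nu3_prime hp]
        have : (0:ℝ) < p := by exact_mod_cast hp.pos
        positivity
      nu_lt_one_of_prime := by
        intro p hp h
        rw [nu3_prime hp]
        have : (5:ℝ) ≤ p := by exact_mod_cast hp5 p hp h
        rw [div_lt_one] <;> linarith }
  have h3d : ∀ d, d ∣ P → (3:ℝ) ^ d.primeFactors.card ≤ d := by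
    intro d hd
    apply three_pow_le (hPsq.squarefree_of_dvd hd)
    intro p hp
    have := hp5 p (Nat.prime_of_mem_primeFactors hp) ((Nat.dvd_of_mem_primeFactors hp).trans hd)
    omega
  have key := selberg s z (Nat.one_le_pow _ _ (by omega)) (by
      intro d hd
      have hsq := hPsq.squarefree_of_dvd hd
      change (nu3 d)⁻¹ ≤ d
      rw [nu3_apply hsq, inv_div]
      apply div_le_self (Nat.cast_nonneg d)
      exact one_le_pow₀ (by norm_num)) (by
      intro d hd
      have hd : d ∣ P := hd
      have hsq := hPsq.squarefree_of_dvd hd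
      have := rem_bound k₁ k₂ hk d N hsq (by
        intro p hp hpd
        have hg := hgood p hp (hpd.trans hd)
        refine ⟨fun h => hg ?_, fun h => hg ?_, fun h => hg ?_⟩
        · exact ((h.mul_right _).mul_right _).mul_left _
        · exact ((h.mul_left _).mul_right _).mul_left _
        · exact (h.mul_left _).mul_left _)
      refine le_trans (le_of_eq ?_) (this.trans (h3d d hd))
      congr 1
      change (∑ n ∈ (Ioc N (2 * N)).image (triF k₁ k₂), if d ∣ n then (1:ℝ) else 0) - nu3 d * N = _
      rw [nu3_apply hsq, sum_image (fun a _ b _ h => triF_inj k₁ k₂ h), ← sum_filter, sum_const,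
        nsmul_eq_mul, mul_one]
      rfl)
  have hsift : ((#{n ∈ Ioc N (2 * N) | n.Prime ∧ (n + k₁).Prime ∧ (n + k₂).Prime} : ℕ) : ℝ)
      ≤ s.siftedSum := by
    change _ ≤ (∑ n ∈ (Ioc N (2 * N)).image (triF k₁ k₂), if Nat.Coprime P n then (1:ℝ) else 0)
    rw [sum_image (fun a _ b _ h => triF_inj k₁ k₂ h), ← sum_filter, sum_const,
        nsmul_eq_mul, mul_one]
    norm_cast
    apply card_le_card
    intro n hn
    simp only [mem_filter, mem_Ioc] at hn ⊢
    refine ⟨hn.1, ?_⟩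
    have hc : ∀ q, q.Prime → N < q → Nat.Coprime P q := by
      intro q hq hNq
      rw [Nat.coprime_comm, hq.coprime_iff_not_dvd]
      intro h
      have := (mem_filter.1 (mem_sdiff.1 (hPmem q hq h)).1).1
      rw [mem_range] at this
      omega
    unfold triF
    exact ((hc n hn.2.1 hn.1.1).mul_right (hc _ hn.2.2.1 (by omega))).mul_right
      (hc _ hn.2.2.2 (by omega))
  -- lower bound for the main sum
  set L := ∑ l ∈ P.divisors with l ≤ z, s.selbergTerms l with hL
  let g : ℕ → ℝ := fun p => 3 / ((p:ℝ) - 3)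
  let a : ℕ → ℝ := fun p => 1 / ((p:ℝ) - 1)
  have hLge : tsumF g (S \ D) z ≤ L := by
    have hterm : ∀ T ∈ (S \ D).powerset, ∏ p ∈ T, g p = s.selbergTerms (∏ p ∈ T, p) := by
      intro T hT
      have hTP : (∏ p ∈ T, p) ∣ P := prod_dvd_prod_of_subset _ _ _ (mem_powerset.1 hT)
      have hTp : ∀ p ∈ T, p.Prime := fun p hp => hQp p (mem_powerset.1 hT hp)
      rw [BoundingSieve.selbergTerms_apply, Nat.primeFactors_prod hTp]
      change _ = nu3 _ * ∏ p ∈ T, (1 - nu3 p)⁻¹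
      unfold nu3
      rw [ArithmeticFunction.prodPrimeFactors_apply (hPsq.squarefree_of_dvd hTP).ne_zero,
        Nat.primeFactors_prod hTp, ← prod_mul_distrib]
      apply prod_congr rfl
      intro p hp
      have h5 : (5:ℝ) ≤ p := by exact_mod_cast hp5 p (hTp p hp) ((dvd_prod_of_mem _ hp).trans hTP)
      have := nu3_prime (hTp p hp)
      unfold nu3 at this
      rw [this]
      simp only [g]
      have h1 : (p:ℝ) - 3 ≠ 0 := by linarith
      have h2 : (p:ℝ) ≠ 0 := by linarith
      have h3 : 1 - 3 / (p:ℝ) ≠ 0 := by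
        rw [one_sub_div h2]; exact div_ne_zero h1 h2
      rw [one_sub_div h2, inv_div]
      field_simp
    unfold tsumF
    rw [← sum_filter]
    rw [sum_congr rfl (fun T hT => hterm T (mem_filter.1 hT).1)]
    have hinj : Set.InjOn (fun T : Finset ℕ => ∏ p ∈ T, p)
        (((S \ D).powerset.filter fun T => ∏ p ∈ T, p ≤ z) : Finset (Finset ℕ)) := by
      intro T hT T' hT' h
      simp only [coe_filter, Set.mem_ofPred_eq, mem_powerset] at hT hT'
      have h1 := Nat.primeFactors_prod (fun p hp => hQp p (hT.1 hp))
      have h2 := Nat.primeFactors_prod (fun p hp => hQp p (hT'.1 hp))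
      rw [← h1, ← h2]
      exact congrArg _ h
    rw [← sum_image (f := fun l => s.selbergTerms l) hinj]
    apply sum_le_sum_of_subset_of_nonneg
    · intro l hl
      simp only [mem_image, mem_filter, mem_powerset] at hl
      obtain ⟨T, ⟨hT, hTz⟩, rfl⟩ := hl
      simp only [mem_filter, Nat.mem_divisors]
      exact ⟨⟨prod_dvd_prod_of_subset _ _ _ hT, hPsq.ne_zero⟩, hTz⟩
    · intro l hl _
      exact (BoundingSieve.selbergTerms_pos (s := s)
        (Nat.dvd_of_mem_divisors (mem_filter.1 hl).1)).le
  have ha0 : ∀ p : ℕ, p.Prime → 0 ≤ a p := by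
    intro p hp
    have : (1:ℝ) < p := by exact_mod_cast hp.one_lt
    simp only [a]
    apply div_nonneg <;> linarith
  have hcube := tsumF_cube D g a S (fun p hp => (hSp p hp).pos) (fun p hp => ha0 p (hSp p hp)) (by
    intro p hp hpD
    have h5 : (5:ℝ) ≤ p := by
      exact_mod_cast hp5 p (hSp p hp) (dvd_prod_of_mem _ (mem_sdiff.2 ⟨hp, hpD⟩))
    simp only [a, g]
    have h1 : (p:ℝ) - 1 > 0 := by linarith
    have h3 : (p:ℝ) - 3 > 0 := by linarith
    rw [show (1:ℝ) + 1 / ((p:ℝ) - 1) = p / (p - 1) by field_simp; ring, div_pow, sub_le_iff_le_add,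
      show 3 / ((p:ℝ) - 3) + 1 = p / (p - 3) by field_simp; ring,
      div_le_div_iff₀ (by positivity) h3]
    nlinarith) y y y
  have hharm : Real.log y ≤ tsumF a S y := by
    refine le_trans ?_ (harm_le S hSp y)
    have h1 := log_add_one_le_harmonic y
    have h2 : Real.log y ≤ Real.log ((y + 1 : ℕ) : ℝ) := by
      apply Real.log_le_log
      · exact_mod_cast (by omega)
      · exact_mod_cast (by omega)
    refine (h2.trans h1).trans (le_of_eq ?_)
    rw [harmonic_eq_sum_Icc]
    push_cast
    rw [filter_true_of_mem]
    · simp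
    · intro n hn q hq
      rw [mem_Icc] at hn
      refine mem_filter.2 ⟨mem_range.2 ?_, Nat.prime_of_mem_primeFactors hq⟩
      have h1 : q ≤ n := Nat.le_of_mem_primeFactors hq
      have h2 : y ≤ z := Nat.le_self_pow (by norm_num) y
      omega
  have hlog : 0 < Real.log y := Real.log_pos (by exact_mod_cast hy)
  have hKle : (∏ p ∈ S ∩ D, (1 + a p) ^ 3) ≤ badK E := by
    unfold badK
    apply prod_subset_le (f := fun p : ℕ => (1 + 1 / ((p:ℝ) - 1)) ^ 3) inter_subset_right
    · intro p hp
      have := ha0 p (Nat.prime_of_mem_primeFactors hp)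
      simp only [a] at this
      exact one_le_pow₀ (by linarith)
  have hgpos : ∀ p ∈ S \ D, 0 ≤ g p := by
    intro p hp
    have h5 : (5:ℝ) ≤ p := by
      exact_mod_cast hp5 p (hQp p hp) (dvd_prod_of_mem _ hp)
    simp only [g]
    apply div_nonneg <;> linarith
  have hLK : (Real.log y) ^ 3 ≤ L * badK E := by
    have ht : 0 ≤ tsumF g (S \ D) z := tsumF_nonneg _ _ hgpos _
    calc (Real.log y) ^ 3 = Real.log y * Real.log y * Real.log y := by ring
      _ ≤ tsumF a S y * tsumF a S y * tsumF a S y := by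
          have h1 : 0 ≤ tsumF a S y := hlog.le.trans hharm
          gcongr
      _ ≤ tsumF g (S \ D) (y * y * y) * ∏ p ∈ S ∩ D, (1 + a p) ^ 3 := hcube
      _ = tsumF g (S \ D) z * ∏ p ∈ S ∩ D, (1 + a p) ^ 3 := by
          rw [hz, show y * y * y = y ^ 3 by ring]
      _ ≤ tsumF g (S \ D) z * badK E := by gcongr
      _ ≤ L * badK E := by
          have : 0 ≤ badK E := by
            refine le_trans ?_ hKle
            exact prod_nonneg fun p hp => by
              have := ha0 p (hSp p (mem_inter.1 hp).1)
              positivity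
          gcongr
  have hKpos : 0 ≤ badK E := by
    refine le_trans ?_ hKle
    exact prod_nonneg fun p hp => by
      have := ha0 p (hSp p (mem_inter.1 hp).1)
      positivity
  have hLpos : 0 < L := by
    have : 0 < L * badK E := lt_of_lt_of_le (by positivity) hLK
    exact pos_of_mul_pos_left this hKpos
  refine hsift.trans (key.trans ?_)
  have hz6 : ((z:ℕ):ℝ) ^ 6 = (y:ℝ) ^ 18 := by
    rw [hz]; push_cast; ring
  rw [hz6]
  apply add_le_add_left
  change (N:ℝ) / L ≤ _
  rw [div_le_div_iff₀ hLpos (by positivity)]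
  calc (N:ℝ) * Real.log y ^ 3 ≤ N * (L * badK E) := by gcongr
    _ = _ := by ring

end Pf


namespace Pf

lemma fac_ge_one {p : ℕ} (hp : p.Prime) : 1 ≤ (1 + 1 / ((p:ℝ) - 1)) ^ 3 := by
  have : (1:ℝ) < p := by exact_mod_cast hp.one_lt
  have : 0 ≤ 1 / ((p:ℝ) - 1) := by apply div_nonneg <;> linarith
  exact one_le_pow₀ (by linarith)

lemma one_le_badK (m : ℕ) : 1 ≤ badK m :=
  one_le_prod_real fun _ hp => fac_ge_one (Nat.prime_of_mem_primeFactors hp)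

lemma badK_mul {a b : ℕ} (ha : a ≠ 0) (hb : b ≠ 0) : badK (a * b) ≤ badK a * badK b := by
  unfold badK
  rw [Nat.primeFactors_mul ha hb, ← prod_union_inter]
  have h1 : 1 ≤ ∏ p ∈ a.primeFactors ∩ b.primeFactors, (1 + 1 / ((p:ℝ) - 1)) ^ 3 :=
    one_le_prod_real fun p hp => fac_ge_one (Nat.prime_of_mem_primeFactors (mem_inter.1 hp).1)
  have h2 : 1 ≤ ∏ p ∈ a.primeFactors ∪ b.primeFactors, (1 + 1 / ((p:ℝ) - 1)) ^ 3 :=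
    one_le_prod_real fun p hp => by
      rcases mem_union.1 hp with h | h <;> exact fac_ge_one (Nat.prime_of_mem_primeFactors h)
  exact le_mul_of_one_le_right (by linarith) h1

lemma badK_cube_le (m : ℕ) : badK m ^ 3 ≤ ∏ p ∈ m.primeFactors, (1 + 1022 / (p:ℝ)) := by
  unfold badK
  rw [← prod_pow]
  apply prod_le_prod
  · intro p hp
    have := fac_ge_one (Nat.prime_of_mem_primeFactors hp)
    positivity
  · intro p hp
    have h2 : (2:ℝ) ≤ p := by exact_mod_cast (Nat.prime_of_mem_primeFactors hp).two_le
    rw [← pow_mul]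
    have h0 : 0 ≤ 1 / ((p:ℝ) - 1) := by apply div_nonneg <;> linarith
    have h1 : 1 / ((p:ℝ) - 1) ≤ 1 := by rw [div_le_one] <;> linarith
    have h3 : 1 / ((p:ℝ) - 1) ≤ 2 / p := by
      rw [div_le_div_iff₀ (by linarith) (by linarith)]; linarith
    have h4 : 1022 / (p:ℝ) = 511 * (2 / p) := by ring
    rw [h4]
    set x := 1 / ((p:ℝ) - 1)
    have h5 : (1 + x) ^ 9 ≤ 1 + 511 * x := by
      have step : ∀ n : ℕ, (1 + x) ^ n ≤ 1 + ((2:ℝ)^n - 1) * x := by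
        intro n
        induction n with
        | zero => simp
        | succ n ih =>
          have hc : (1:ℝ) ≤ 2 ^ n := one_le_pow₀ (by norm_num)
          rw [pow_succ, pow_succ]
          have : (1 + x) ^ n * (1 + x) ≤ (1 + ((2:ℝ)^n - 1) * x) * (1 + x) := by gcongr
          have h7 : ((2:ℝ)^n - 1) * (x * x) ≤ ((2:ℝ)^n - 1) * x := by
            apply mul_le_mul_of_nonneg_left _ (by linarith)
            nlinarith
          nlinarith
      have := step 9
      norm_num at this
      exact this
    norm_num
    linarith

lemma sum_prod_le (c : ℕ → ℝ) (hc : ∀ p, 0 ≤ c p) (H : ℕ) :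
    ∑ k ∈ Icc 1 H, ∏ p ∈ k.primeFactors, (1 + c p) ≤
      H * ∏ p ∈ (range (H + 1)).filter Nat.Prime, (1 + c p / p) := by
  classical
  set S := (range (H + 1)).filter Nat.Prime with hS
  have h1 : ∀ k ∈ Icc 1 H, ∏ p ∈ k.primeFactors, (1 + c p)
      = ∑ T ∈ S.powerset, if T ⊆ k.primeFactors then ∏ p ∈ T, c p else 0 := by
    intro k hk
    rw [mem_Icc] at hk
    rw [prod_one_add, ← sum_filter]
    apply sum_congr _ (fun _ _ => rfl)
    ext T
    simp only [mem_powerset, mem_filter]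
    refine ⟨fun h => ⟨fun p hp => ?_, h⟩, fun h => h.2⟩
    have hp' := h hp
    refine mem_filter.2 ⟨mem_range.2 ?_, Nat.prime_of_mem_primeFactors hp'⟩
    have := Nat.le_of_mem_primeFactors hp'
    omega
  rw [sum_congr rfl h1, sum_comm, prod_one_add, mul_sum]
  apply sum_le_sum
  intro T hT
  have hTp : ∀ p ∈ T, p.Prime := fun p hp => (mem_filter.1 (mem_powerset.1 hT hp)).2
  rw [← sum_filter, sum_const, nsmul_eq_mul, prod_div_distrib]
  have hc0 : 0 ≤ ∏ p ∈ T, c p := prod_nonneg fun p _ => hc p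
  have hpos : 0 < ∏ p ∈ T, p := prod_pos fun p hp => (hTp p hp).pos
  have hcard : #{k ∈ Icc 1 H | T ⊆ k.primeFactors} ≤ H / ∏ p ∈ T, p := by
    rw [← Nat.Ioc_filter_dvd_card_eq_div]
    apply card_le_card
    intro k hk
    simp only [mem_filter, mem_Icc, mem_Ioc] at hk ⊢
    refine ⟨by omega, ?_⟩
    exact (prod_dvd_prod_of_subset _ _ _ hk.2).trans (Nat.prod_primeFactors_dvd k)
  have hcard' : ((#{k ∈ Icc 1 H | T ⊆ k.primeFactors} : ℕ) : ℝ) ≤ (H:ℝ) / ((∏ p ∈ T, p : ℕ) : ℝ) :=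
    le_trans (by exact_mod_cast hcard) Nat.cast_div_le
  calc _ ≤ (H:ℝ) / ((∏ p ∈ T, p : ℕ) : ℝ) * ∏ p ∈ T, c p := by gcongr
    _ = _ := by push_cast; ring

lemma sum_badK : ∃ B : ℝ, 0 < B ∧ ∀ H : ℕ, ∑ k ∈ Icc 1 H, badK k ^ 3 ≤ B * H := by
  refine ⟨Real.exp (1022 * ∑' n : ℕ, 1 / (n:ℝ) ^ 2), Real.exp_pos _, fun H => ?_⟩
  have hs : Summable (fun n : ℕ => 1 / (n:ℝ) ^ 2) := Real.summable_one_div_nat_pow.2 (by norm_num)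
  have h1 := sum_prod_le (fun p => 1022 / (p:ℝ)) (fun p => by positivity) H
  refine (sum_le_sum fun k _ => badK_cube_le k).trans (h1.trans ?_)
  rw [mul_comm]
  gcongr
  calc _ ≤ ∏ p ∈ (range (H + 1)).filter Nat.Prime, Real.exp (1022 * (1 / (p:ℝ) ^ 2)) := by
        apply prod_le_prod
        · intros; positivity
        · intro p hp
          have := Real.add_one_le_exp (1022 * (1 / (p:ℝ) ^ 2))
          refine le_trans (le_of_eq ?_) this
          rw [div_div]; ring
    _ = Real.exp (∑ p ∈ (range (H + 1)).filter Nat.Prime, 1022 * (1 / (p:ℝ) ^ 2)) := by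
        rw [Real.exp_sum]
    _ ≤ _ := by
        rw [← mul_sum]
        gcongr
        exact hs.sum_le_tsum _ (fun _ _ => by positivity)

lemma sum_pairs : ∃ B : ℝ, 0 < B ∧ ∀ H : ℕ,
    ∑ k ∈ (Icc 1 H ×ˢ Icc 1 H).filter (fun k => k.1 < k.2),
      badK (6 * (k.1 * k.2 * (k.2 - k.1))) ≤ B * (H:ℝ) ^ 2 := by
  obtain ⟨B, hB, hsum⟩ := sum_badK
  have h6 := one_le_badK 6
  refine ⟨badK 6 * (3 * B), by positivity, fun H => ?_⟩
  have hterm : ∀ k ∈ (Icc 1 H ×ˢ Icc 1 H).filter (fun k => k.1 < k.2),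
      badK (6 * (k.1 * k.2 * (k.2 - k.1))) ≤
        badK 6 * (badK k.1 ^ 3 + badK k.2 ^ 3 + badK (k.2 - k.1) ^ 3) := by
    rintro ⟨a, b⟩ hk
    simp only [mem_filter, mem_product, mem_Icc] at hk ⊢
    have ha : a ≠ 0 := by omega
    have hb : b ≠ 0 := by omega
    have hc : b - a ≠ 0 := by omega
    have h1 := badK_mul (show 6 ≠ 0 by norm_num) (mul_ne_zero (mul_ne_zero ha hb) hc)
    have h2 := badK_mul (mul_ne_zero ha hb) hc
    have h3 := badK_mul ha hb
    have x1 := one_le_badK a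
    have x2 := one_le_badK b
    have x3 := one_le_badK (b - a)
    refine h1.trans ?_
    gcongr
    refine h2.trans ((mul_le_mul_of_nonneg_right h3 (by linarith)).trans ?_)
    generalize badK a = x at *
    generalize badK b = y at *
    generalize badK (b - a) = z at *
    have hn : 0 ≤ (x + y + z) * ((x - y)^2 + (y - z)^2 + (z - x)^2) := by positivity
    have hxyz : 0 ≤ x * y * z := by positivity
    nlinarith
  refine (sum_le_sum hterm).trans ?_
  rw [← mul_sum, mul_assoc]
  gcongr
  rw [sum_add_distrib, sum_add_distrib]
  have nn : ∀ m : ℕ, 0 ≤ badK m ^ 3 := fun m => by have := one_le_badK m; positivity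
  have s1 : ∑ k ∈ (Icc 1 H ×ˢ Icc 1 H).filter (fun k => k.1 < k.2), badK k.1 ^ 3 ≤ B * (H:ℝ)^2 := by
    refine (sum_le_sum_of_subset_of_nonneg (filter_subset _ _) (fun _ _ _ => nn _)).trans ?_
    rw [sum_product_right]
    simp only [sum_const, Nat.card_Icc, nsmul_eq_mul]
    have := hsum H
    calc _ ≤ ((H + 1 - 1 : ℕ) : ℝ) * (B * H) := by gcongr
      _ = _ := by simp; ring
  have s2 : ∑ k ∈ (Icc 1 H ×ˢ Icc 1 H).filter (fun k => k.1 < k.2), badK k.2 ^ 3 ≤ B * (H:ℝ)^2 := by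
    refine (sum_le_sum_of_subset_of_nonneg (filter_subset _ _) (fun _ _ _ => nn _)).trans ?_
    rw [sum_product]
    simp only [sum_const, Nat.card_Icc, nsmul_eq_mul]
    have := hsum H
    calc _ ≤ ((H + 1 - 1 : ℕ) : ℝ) * (B * H) := by gcongr
      _ = _ := by simp; ring
  have s3 : ∑ k ∈ (Icc 1 H ×ˢ Icc 1 H).filter (fun k => k.1 < k.2), badK (k.2 - k.1) ^ 3
      ≤ B * (H:ℝ)^2 := by
    have hinj : Set.InjOn (fun k : ℕ × ℕ => (k.1, k.2 - k.1))
        (((Icc 1 H ×ˢ Icc 1 H).filter (fun k => k.1 < k.2) : Finset (ℕ × ℕ)) : Set (ℕ × ℕ)) := by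
      rintro ⟨a, b⟩ h ⟨a', b'⟩ h' he
      simp only [coe_filter, Set.mem_ofPred_eq, mem_product, mem_Icc, Prod.mk.injEq] at h h' he ⊢
      omega
    rw [← sum_image (f := fun k : ℕ × ℕ => badK k.2 ^ 3) hinj]
    have hsub : ((Icc 1 H ×ˢ Icc 1 H).filter (fun k => k.1 < k.2)).image
        (fun k : ℕ × ℕ => (k.1, k.2 - k.1)) ⊆ Icc 1 H ×ˢ Icc 1 H := by
      rintro ⟨a, b⟩ h
      simp only [mem_image, mem_filter, mem_product, mem_Icc, Prod.mk.injEq, Prod.exists] at h ⊢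
      omega
    refine (sum_le_sum_of_subset_of_nonneg hsub (fun _ _ _ => nn _)).trans ?_
    rw [sum_product]
    simp only [sum_const, Nat.card_Icc, nsmul_eq_mul]
    have := hsum H
    calc _ ≤ ((H + 1 - 1 : ℕ) : ℝ) * (B * H) := by gcongr
      _ = _ := by simp; ring
  linarith

lemma pi_lower (N : ℕ) (hN : 4 ≤ N) : (N:ℝ) / 4 / Real.log N ≤ Nat.primeCounting N := by
  have h := Chebyshev.pi_ge N
  have hN' : (4:ℝ) ≤ N := by exact_mod_cast hN
  have hlog : 0 < Real.log N := Real.log_pos (by linarith)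
  refine le_trans ?_ h
  have h1 := Real.log_two_gt_d9
  have h2 := Real.log_two_lt_d9
  have h3 : Real.log (((N:ℝ) + 1) / 4) ≤ ((N:ℝ) + 1) / 4 - 1 :=
    Real.log_le_sub_one_of_pos (by positivity)
  rw [Real.log_div (by positivity) (by norm_num), show (4:ℝ) = 2 ^ 2 by norm_num, Real.log_pow] at h3
  push_cast at h3
  gcongr
  nlinarith

lemma exists_root (N : ℕ) (hN : 2 ^ 36 ≤ N) :
    ∃ y : ℕ, 2 ≤ y ∧ y ^ 36 ≤ N ∧ Real.log N ≤ 72 * Real.log y := by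
  set y := Nat.findGreatest (fun y => y ^ 36 ≤ N) N with hy
  have h2 : 2 ≤ y := Nat.le_findGreatest (by omega) hN
  have hle : y ^ 36 ≤ N := Nat.findGreatest_spec (P := fun y => y ^ 36 ≤ N) (m := 2) (by omega) hN
  refine ⟨y, h2, hle, ?_⟩
  have hlt : N < (y + 1) ^ 36 := by
    by_contra hcon
    push Not at hcon
    have : y + 1 ≤ N := (Nat.le_self_pow (by norm_num) (y + 1)).trans hcon
    have := Nat.le_findGreatest (P := fun y => y ^ 36 ≤ N) this hcon
    omega
  have hlt2 : N ≤ y ^ 72 := by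
    have : y + 1 ≤ y ^ 2 := by nlinarith
    calc N ≤ (y + 1) ^ 36 := hlt.le
      _ ≤ (y ^ 2) ^ 36 := by gcongr
      _ = y ^ 72 := by rw [← pow_mul]
  have : Real.log N ≤ Real.log ((y:ℝ) ^ 72) := by
    apply Real.log_le_log
    · exact_mod_cast (by omega)
    · exact_mod_cast hlt2
  rw [Real.log_pow] at this
  exact_mod_cast this

lemma log_cube : ∃ N₁ : ℕ, ∀ N : ℕ, N₁ ≤ N → Real.log N ^ 3 ≤ √(N:ℝ) := by
  have h := isLittleO_log_rpow_rpow_atTop (3:ℝ) (show (0:ℝ) < 1/2 by norm_num)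
  have h2 := (h.bound (show (0:ℝ) < 1 by norm_num))
  have h3 := (tendsto_natCast_atTop_atTop (R := ℝ)).eventually h2
  obtain ⟨N₁, hN₁⟩ := Filter.eventually_atTop.1 h3
  refine ⟨N₁, fun N hN => ?_⟩
  have := hN₁ N hN
  rw [one_mul, ← Real.sqrt_eq_rpow, Real.norm_of_nonneg (Real.sqrt_nonneg _)] at this
  refine le_trans ?_ this
  rw [show (3:ℝ) = ((3:ℕ):ℝ) by norm_num, Real.rpow_natCast]
  exact le_abs_self _

end Pf

theorem nonconsecutive_close_prime_pairs_bound :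
    ∃ C : ℝ, 0 < C ∧ ∃ N₀ : ℕ, ∀ N : ℕ, N₀ ≤ N → ∀ h : ℝ, 2 < h → h ≤ N →
      ((((Finset.Ioc N (2*N)) ×ˢ (Finset.Ioc N (2*N))).filter (fun x =>
          x.1.Prime ∧ x.2.Prime ∧ x.1 < x.2 ∧ ((x.2 : ℝ) - (x.1 : ℝ)) ≤ h ∧
          ∃ m ∈ Finset.Ioo x.1 x.2, m.Prime)).card : ℝ)
        ≤ C * (h / Real.log N)^2 * (Nat.primeCounting N : ℝ) := by
  classical
  obtain ⟨B, hB, hsum⟩ := Pf.sum_pairs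
  obtain ⟨N₁, hN₁⟩ := Pf.log_cube
  refine ⟨4 * (72 ^ 3 + 1) * B, by positivity, max N₁ (2 ^ 36), fun N hN h h2 _ => ?_⟩
  have hNa : N₁ ≤ N := (le_max_left _ _).trans hN
  have hNb : 2 ^ 36 ≤ N := (le_max_right _ _).trans hN
  obtain ⟨y, hy2, hyN, hlogy⟩ := Pf.exists_root N hNb
  have hNr : (1:ℝ) < N := by exact_mod_cast (by omega)
  have hlogN : 0 < Real.log N := Real.log_pos hNr
  have hlogy0 : 0 < Real.log y := Real.log_pos (by exact_mod_cast hy2)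
  set H := ⌊h⌋₊ with hH
  set K := (Icc 1 H ×ˢ Icc 1 H).filter (fun k => k.1 < k.2) with hK
  set T : ℕ × ℕ → Finset ℕ := fun k =>
    (Ioc N (2 * N)).filter fun n => n.Prime ∧ (n + k.1).Prime ∧ (n + k.2).Prime with hT
  set A := ((Finset.Ioc N (2*N)) ×ˢ (Finset.Ioc N (2*N))).filter (fun x : ℕ × ℕ =>
          x.1.Prime ∧ x.2.Prime ∧ x.1 < x.2 ∧ ((x.2 : ℝ) - (x.1 : ℝ)) ≤ h ∧
          ∃ m ∈ Finset.Ioo x.1 x.2, m.Prime) with hA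
  have hcover : A ⊆ K.biUnion fun k => (T k).image fun n => (n, n + k.2) := by
    rintro ⟨p, q⟩ hx
    simp only [hA, mem_filter, mem_product, mem_Ioc, mem_Ioo] at hx
    obtain ⟨⟨⟨hp1, hp2⟩, hq1, hq2⟩, hpp, hqp, hpq, hdiff, m, ⟨hm1, hm2⟩, hmp⟩ := hx
    have hle : q - p ≤ H := by
      apply Nat.le_floor
      rw [Nat.cast_sub hpq.le]
      exact hdiff
    simp only [mem_biUnion, hK, hT, mem_filter, mem_product, mem_Icc, mem_image, mem_Ioc]
    refine ⟨(m - p, q - p), ⟨⟨⟨?_, ?_⟩, ?_, ?_⟩, ?_⟩, p, ⟨⟨hp1, hp2⟩, hpp, ?_, ?_⟩, ?_⟩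
    · omega
    · omega
    · omega
    · omega
    · simp only; omega
    · simp only [Nat.add_sub_cancel' hm1.le]; exact hmp
    · simp only [Nat.add_sub_cancel' hpq.le]; exact hqp
    · simp only [Nat.add_sub_cancel' hpq.le]
  have hAcard : (#A : ℝ) ≤ ∑ k ∈ K, ((#(T k) : ℕ) : ℝ) := by
    have : #A ≤ ∑ k ∈ K, #(T k) :=
      (card_le_card hcover).trans (card_biUnion_le.trans (sum_le_sum fun k _ => card_image_le))
    exact_mod_cast this
  have hyhalf : (y:ℝ) ^ 18 ≤ (N:ℝ) / Real.log N ^ 3 := by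
    have h1 : (y:ℝ) ^ 18 ≤ √(N:ℝ) := by
      apply Real.le_sqrt_of_sq_le
      rw [← pow_mul]
      exact_mod_cast hyN
    rw [le_div_iff₀ (by positivity)]
    calc (y:ℝ) ^ 18 * Real.log N ^ 3 ≤ √(N:ℝ) * √(N:ℝ) := by
          gcongr
          exact hN₁ N hNa
      _ = N := Real.mul_self_sqrt (by positivity)
  have hterm : ∀ k ∈ K, ((#(T k) : ℕ) : ℝ) ≤
      (N:ℝ) / Real.log N ^ 3 * (72 ^ 3 + 1) * Pf.badK (6 * (k.1 * k.2 * (k.2 - k.1))) := by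
    rintro ⟨a, b⟩ hk
    simp only [hK, mem_filter, mem_product, mem_Icc] at hk
    have hb := Pf.triple_bound a b N y (by omega) hk.2 hy2
      ((Nat.pow_le_pow_right (by omega) (by norm_num)).trans hyN)
    refine hb.trans ?_
    simp only
    set β := Pf.badK (6 * (a * b * (b - a)))
    have hβ : 1 ≤ β := Pf.one_le_badK _
    have h1 : (N:ℝ) * β / Real.log y ^ 3 ≤ (N:ℝ) / Real.log N ^ 3 * 72 ^ 3 * β := by
      rw [div_le_iff₀ (by positivity)]
      have : Real.log N ^ 3 ≤ (72 * Real.log y) ^ 3 := by gcongr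
      calc (N:ℝ) * β = (N:ℝ) / Real.log N ^ 3 * β * Real.log N ^ 3 := by field_simp
        _ ≤ (N:ℝ) / Real.log N ^ 3 * β * (72 * Real.log y) ^ 3 := by gcongr
        _ = _ := by ring
    have h3 : (y:ℝ) ^ 18 ≤ (N:ℝ) / Real.log N ^ 3 * β :=
      hyhalf.trans (le_mul_of_one_le_right (by positivity) hβ)
    linarith
  have hHh : (H:ℝ) ≤ h := Nat.floor_le (by linarith)
  have hpi := Pf.pi_lower N (by omega)
  calc (#A : ℝ) ≤ ∑ k ∈ K, ((#(T k) : ℕ) : ℝ) := hAcard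
    _ ≤ ∑ k ∈ K, (N:ℝ) / Real.log N ^ 3 * (72 ^ 3 + 1) * Pf.badK (6 * (k.1 * k.2 * (k.2 - k.1))) :=
        sum_le_sum hterm
    _ = (N:ℝ) / Real.log N ^ 3 * (72 ^ 3 + 1) * ∑ k ∈ K, Pf.badK (6 * (k.1 * k.2 * (k.2 - k.1))) := by
        rw [mul_sum]
    _ ≤ (N:ℝ) / Real.log N ^ 3 * (72 ^ 3 + 1) * (B * (H:ℝ) ^ 2) := by
        gcongr
        exact hsum H
    _ ≤ (N:ℝ) / Real.log N ^ 3 * (72 ^ 3 + 1) * (B * h ^ 2) := by gcongr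
    _ = 4 * (72 ^ 3 + 1) * B * (h / Real.log N) ^ 2 * ((N:ℝ) / 4 / Real.log N) := by
        field_simp
    _ ≤ _ := by gcongr
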